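/- Let A ⊆ ℝⁿ be a convex body. Then binom(2n, n)⁻¹ · λ_n(supp g_A) ≤ g_A(0) ≤ 2⁻ⁿ · λ_n(supp g_A), where supp g_A denotes the closure of {x : g_A(x) ≠ 0} (which equals the difference set A + (−A)). -/

import Mathlib

open MeasureTheory Topology Filter Set

/-- The covariogram of a set `A ⊆ ℝⁿ`: `g_A(x) = λₙ(A ∩ (A + x))`. -/
noncomputable def covariogram {n : ℕ} (A : Set (EuclideanSpace ℝ (Fin n)))
    (x : EuclideanSpace ℝ (Fin n)) : ℝ :=
  (volume (A ∩ ((· + x) '' A))).toReal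

open scoped ENNReal Pointwise

/-!
Upper bound: `λ(A - A) ≥ 2ⁿ λ(A)` is the Brunn–Minkowski inequality for `A` and `-A`. It follows
from the Prékopa–Leindler inequality, which is inherited by product measures and by images of
measures under linear maps, and so reduces to dimension one. There, after normalizing suprema to
one, it is the Brunn–Minkowski inequality on `ℝ` applied to superlevel sets.

Lower bound: if `x = t (a - b)` with `a, b ∈ A`, then `A ∩ (A + x)` contains a translate of
`(1 - t) A`. So `g_A ^ (1 / n)` lies above the cone of height `g_A(0) ^ (1 / n)` over `A - A`, and
integrating the `n`-th powers gives `λ(A)² = ∫ g_A ≥ λ(A) λ(A - A) n B(n, n + 1)`, where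
`n B(n, n + 1) = binom(2n, n)⁻¹`.
-/

section PrekopaLeindler

variable {a b : ℝ}

theorem rpow_mul_rpow_le_arith_mean (ha : 0 < a) (hb : 0 < b) (hab : a + b = 1) (x y : ℝ≥0∞) :
    x ^ a * y ^ b ≤ ENNReal.ofReal a * x + ENNReal.ofReal b * y := by
  have hconj : (a⁻¹).HolderConjugate b⁻¹ := Real.HolderConjugate.inv_inv ha hb hab
  have young := ENNReal.young_inequality (x ^ a) (y ^ b) hconj
  rwa [ENNReal.rpow_rpow_inv ha.ne', ENNReal.rpow_rpow_inv hb.ne', ENNReal.ofReal_inv_of_pos ha,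
    ENNReal.ofReal_inv_of_pos hb, div_eq_mul_inv, div_eq_mul_inv, inv_inv, inv_inv, mul_comm x,
    mul_comm y] at young

-- Translates of `K` and `L` inside `K + L` meet only at `max K + min L`.
theorem volume_add_volume_le_volume_add_of_isCompact {K L : Set ℝ} (hK : IsCompact K)
    (hL : IsCompact L) (hK₀ : K.Nonempty) (hL₀ : L.Nonempty) :
    volume K + volume L ≤ volume (K + L) := by
  obtain ⟨k, hk, hk_max⟩ := hK.exists_isGreatest hK₀
  obtain ⟨l, hl, hl_min⟩ := hL.exists_isLeast hL₀
  have hdisj : AEDisjoint volume (l +ᵥ K) (k +ᵥ L) := by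
    refine measure_mono_null (t := {k + l}) ?_ (measure_singleton _)
    rintro _ ⟨⟨x, hx, rfl⟩, y, hy, hxy⟩
    simp only [vadd_eq_add] at hxy
    simp only [vadd_eq_add, mem_singleton_iff]
    linarith [hk_max hx, hl_min hy]
  calc volume K + volume L
      = volume (l +ᵥ K) + volume (k +ᵥ L) := by simp only [measure_vadd]
    _ = volume ((l +ᵥ K) ∪ (k +ᵥ L)) :=
        (measure_union₀ (hL.measurableSet.const_vadd k).nullMeasurableSet hdisj).symm
    _ ≤ volume (K + L) := by
        refine measure_mono (union_subset ?_ ?_)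
        · rintro _ ⟨x, hx, rfl⟩
          exact ⟨x, hx, l, hl, add_comm x l⟩
        · rintro _ ⟨y, hy, rfl⟩
          exact ⟨k, hk, y, hy, rfl⟩

theorem volume_add_volume_le_volume_add {A B : Set ℝ} (hA : MeasurableSet A)
    (hB : MeasurableSet B) (hA₀ : A.Nonempty) (hB₀ : B.Nonempty) :
    volume A + volume B ≤ volume (A + B) := by
  obtain ⟨x, hx⟩ := hA₀
  obtain ⟨y, hy⟩ := hB₀
  rw [hA.measure_eq_iSup_isCompact, hB.measure_eq_iSup_isCompact]
  simp only [iSup_and']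
  refine ENNReal.biSup_add_biSup_le' ⟨∅, by simp⟩ ⟨∅, by simp⟩ fun K ⟨hKA, hK⟩ L ⟨hLB, hL⟩ ↦ ?_
  calc volume K + volume L
      ≤ volume (insert x K) + volume (insert y L) := by gcongr <;> exact subset_insert _ _
    _ ≤ volume (insert x K + insert y L) :=
        volume_add_volume_le_volume_add_of_isCompact (hK.insert x) (hL.insert y)
          (insert_nonempty _ _) (insert_nonempty _ _)
    _ ≤ volume (A + B) := measure_mono (add_subset_add (insert_subset hx hKA)
          (insert_subset hy hLB))

theorem lintegral_eq_lintegral_meas_ofReal_lt {α : Type*} [MeasurableSpace α] (μ : Measure α)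
    {f : α → ℝ≥0∞} (hf : Measurable f) (hf_top : ∀ x, f x ≠ ∞) :
    ∫⁻ x, f x ∂μ = ∫⁻ t in Ioi (0 : ℝ), μ {x | ENNReal.ofReal t < f x} := by
  calc ∫⁻ x, f x ∂μ
      = ∫⁻ x, ENNReal.ofReal (f x).toReal ∂μ := by simp only [ENNReal.ofReal_toReal (hf_top _)]
    _ = ∫⁻ t in Ioi (0 : ℝ), μ {x | t < (f x).toReal} :=
        lintegral_eq_lintegral_meas_lt μ (Eventually.of_forall fun _ ↦ ENNReal.toReal_nonneg)
          hf.ennreal_toReal.aemeasurable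
    _ = ∫⁻ t in Ioi (0 : ℝ), μ {x | ENNReal.ofReal t < f x} :=
        setLIntegral_congr_fun measurableSet_Ioi fun t ht ↦ by
          simp only [ENNReal.ofReal_lt_iff_lt_toReal (le_of_lt ht) (hf_top _)]

theorem arith_mean_measure_superlevel_le {f g h : ℝ → ℝ≥0∞} (ha : 0 < a) (hb : 0 < b)
    (hab : a + b = 1) (hf : Measurable f) (hg : Measurable g)
    (hfgh : ∀ x y, f x ^ a * g y ^ b ≤ h (a • x + b • y)) {t : ℝ≥0∞}
    (htf : ∃ x, t < f x) (htg : ∃ y, t < g y) :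
    ENNReal.ofReal a * volume {x | t < f x} + ENNReal.ofReal b * volume {x | t < g x} ≤
      volume {x | t < h x} := by
  have hfa : MeasurableSet (a • {x | t < f x}) :=
    (measurableSet_lt measurable_const hf).const_smul₀ a
  have hgb : MeasurableSet (b • {x | t < g x}) :=
    (measurableSet_lt measurable_const hg).const_smul₀ b
  calc ENNReal.ofReal a * volume {x | t < f x} + ENNReal.ofReal b * volume {x | t < g x}
      = volume (a • {x | t < f x}) + volume (b • {x | t < g x}) := by
        simp only [Measure.addHaar_smul_of_nonneg _ ha.le, Measure.addHaar_smul_of_nonneg _ hb.le,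
          Module.finrank_self, pow_one]
    _ ≤ volume (a • {x | t < f x} + b • {x | t < g x}) :=
        volume_add_volume_le_volume_add hfa hgb (Nonempty.smul_set htf) (Nonempty.smul_set htg)
    _ ≤ volume {x | t < h x} := by
        refine measure_mono ?_
        rintro _ ⟨_, ⟨x, hx, rfl⟩, _, ⟨y, hy, rfl⟩, rfl⟩
        calc t = t ^ a * t ^ b := by
              rw [← ENNReal.rpow_add_of_nonneg a b ha.le hb.le, hab, ENNReal.rpow_one]
          _ < f x ^ a * g y ^ b :=
              ENNReal.mul_lt_mul (ENNReal.rpow_lt_rpow hx ha) (ENNReal.rpow_lt_rpow hy hb)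
          _ ≤ h (a • x + b • y) := hfgh x y

theorem arith_mean_lintegral_le_of_iSup_eq_one {f g h : ℝ → ℝ≥0∞} (ha : 0 < a) (hb : 0 < b)
    (hab : a + b = 1) (hf : Measurable f) (hg : Measurable g) (hh : Measurable h)
    (hf_sup : ⨆ x, f x = 1) (hg_sup : ⨆ x, g x = 1)
    (hfgh : ∀ x y, f x ^ a * g y ^ b ≤ h (a • x + b • y)) :
    ENNReal.ofReal a * (∫⁻ x, f x) + ENNReal.ofReal b * ∫⁻ x, g x ≤ ∫⁻ x, h x := by
  have hf_le (x) : f x ≤ 1 := hf_sup ▸ le_iSup f x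
  have hg_le (x) : g x ≤ 1 := hg_sup ▸ le_iSup g x
  have hmeas (u : ℝ → ℝ≥0∞) : Measurable fun t : ℝ ↦ volume {x | ENNReal.ofReal t < u x} :=
    Antitone.measurable fun s t hst ↦ measure_mono fun x hx ↦
      (ENNReal.ofReal_le_ofReal hst).trans_lt hx
  have layercake {u : ℝ → ℝ≥0∞} (hu : Measurable u) (hu_le : ∀ x, u x ≤ 1) :
      ∫⁻ x, u x = ∫⁻ t in Ioi (0 : ℝ), volume {x | ENNReal.ofReal t < u x} :=
    lintegral_eq_lintegral_meas_ofReal_lt volume hu fun x ↦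
      ((hu_le x).trans_lt ENNReal.one_lt_top).ne
  calc ENNReal.ofReal a * (∫⁻ x, f x) + ENNReal.ofReal b * ∫⁻ x, g x
      = ∫⁻ t in Ioi (0 : ℝ), (ENNReal.ofReal a * volume {x | ENNReal.ofReal t < f x} +
          ENNReal.ofReal b * volume {x | ENNReal.ofReal t < g x}) := by
        rw [layercake hf hf_le, layercake hg hg_le, lintegral_add_left ((hmeas f).const_mul _),
          lintegral_const_mul _ (hmeas f), lintegral_const_mul _ (hmeas g)]
    _ ≤ ∫⁻ t in Ioi (0 : ℝ), volume {x | ENNReal.ofReal t < min (h x) 1} := by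
        refine lintegral_mono fun t ↦ ?_
        rcases lt_or_ge (ENNReal.ofReal t) 1 with ht | ht
        · simp only [lt_min_iff, ht, and_true]
          exact arith_mean_measure_superlevel_le ha hb hab hf hg hfgh
            (lt_iSup_iff.1 (hf_sup ▸ ht)) (lt_iSup_iff.1 (hg_sup ▸ ht))
        · simp [((hf_le _).trans ht).not_gt, ((hg_le _).trans ht).not_gt]
    _ = ∫⁻ x, min (h x) 1 :=
        (layercake (hh.min measurable_const) fun x ↦ min_le_right _ _).symm
    _ ≤ ∫⁻ x, h x := lintegral_mono fun x ↦ min_le_left _ _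

theorem prekopaLeindler_real_of_iSup_ne_top {f g h : ℝ → ℝ≥0∞} (ha : 0 < a) (hb : 0 < b)
    (hab : a + b = 1) (hf : Measurable f) (hg : Measurable g) (hh : Measurable h)
    (hf_sup : ⨆ x, f x ≠ ∞) (hg_sup : ⨆ x, g x ≠ ∞)
    (hfgh : ∀ x y, f x ^ a * g y ^ b ≤ h (a • x + b • y)) :
    (∫⁻ x, f x) ^ a * (∫⁻ x, g x) ^ b ≤ ∫⁻ x, h x := by
  set F := ⨆ x, f x
  set G := ⨆ x, g x
  rcases eq_or_ne F 0 with hF₀ | hF₀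
  · simp [ENNReal.iSup_eq_zero.1 hF₀, ENNReal.zero_rpow_of_pos ha]
  rcases eq_or_ne G 0 with hG₀ | hG₀
  · simp [ENNReal.iSup_eq_zero.1 hG₀, ENNReal.zero_rpow_of_pos hb]
  have hFa₀ : F ^ a ≠ 0 := (ENNReal.rpow_pos (pos_iff_ne_zero.2 hF₀) hf_sup).ne'
  have hFa_top : F ^ a ≠ ∞ := ENNReal.rpow_ne_top_of_nonneg ha.le hf_sup
  have hGb₀ : G ^ b ≠ 0 := (ENNReal.rpow_pos (pos_iff_ne_zero.2 hG₀) hg_sup).ne'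
  have hGb_top : G ^ b ≠ ∞ := ENNReal.rpow_ne_top_of_nonneg hb.le hg_sup
  have hFG₀ : F ^ a * G ^ b ≠ 0 := mul_ne_zero hFa₀ hGb₀
  have hFG_top : F ^ a * G ^ b ≠ ∞ := ENNReal.mul_ne_top hFa_top hGb_top
  have normalize (x y : ℝ≥0∞) : x ^ a * y ^ b / (F ^ a * G ^ b) = (x / F) ^ a * (y / G) ^ b := by
    rw [ENNReal.div_rpow_of_nonneg _ _ ha.le, ENNReal.div_rpow_of_nonneg _ _ hb.le,
      ENNReal.mul_div_mul_comm (Or.inl hFa₀) (Or.inl hFa_top)]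
  have lintegral_div {u : ℝ → ℝ≥0∞} (hu : Measurable u) (c : ℝ≥0∞) :
      ∫⁻ x, u x / c = (∫⁻ x, u x) / c := by
    simp only [div_eq_mul_inv, lintegral_mul_const _ hu]
  rw [← ENNReal.mul_le_mul_iff_left (ENNReal.inv_ne_zero.2 hFG_top) (ENNReal.inv_ne_top.2 hFG₀),
    ← div_eq_mul_inv, ← div_eq_mul_inv]
  calc (∫⁻ x, f x) ^ a * (∫⁻ x, g x) ^ b / (F ^ a * G ^ b)
      = (∫⁻ x, f x / F) ^ a * (∫⁻ x, g x / G) ^ b := by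
        rw [normalize, lintegral_div hf, lintegral_div hg]
    _ ≤ ENNReal.ofReal a * (∫⁻ x, f x / F) + ENNReal.ofReal b * ∫⁻ x, g x / G :=
        rpow_mul_rpow_le_arith_mean ha hb hab _ _
    _ ≤ ∫⁻ x, h x / (F ^ a * G ^ b) := by
        refine arith_mean_lintegral_le_of_iSup_eq_one ha hb hab (hf.div_const F) (hg.div_const G)
          (hh.div_const _) ?_ ?_ fun x y ↦ ?_
        · rw [← ENNReal.iSup_div, ENNReal.div_self hF₀ hf_sup]
        · rw [← ENNReal.iSup_div, ENNReal.div_self hG₀ hg_sup]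
        · rw [← normalize]
          gcongr
          exact hfgh x y
    _ = (∫⁻ x, h x) / (F ^ a * G ^ b) := lintegral_div hh _

/-- The Prékopa–Leindler inequality for the measure `μ` with weights `a` and `b`: if
`h (a x + b y)` dominates the weighted geometric mean of `f x` and `g y` for all `x` and `y`, then
`∫ h` dominates that of `∫ f` and `∫ g`. The functions take values in `[0, ∞]`, so that no
integrability is needed. -/
def PrekopaLeindler {E : Type*} [AddCommGroup E] [Module ℝ E] [MeasurableSpace E] (μ : Measure E)
    (a b : ℝ) : Prop :=
  ∀ ⦃f g h : E → ℝ≥0∞⦄, Measurable f → Measurable g → Measurable h →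
    (∀ x y, f x ^ a * g y ^ b ≤ h (a • x + b • y)) →
    (∫⁻ x, f x ∂μ) ^ a * (∫⁻ x, g x ∂μ) ^ b ≤ ∫⁻ x, h x ∂μ

theorem rpow_lintegral_eq_iSup_rpow_lintegral_min {α : Type*} [MeasurableSpace α] (μ : Measure α)
    (ha : 0 < a) {f : α → ℝ≥0∞} (hf : Measurable f) :
    (∫⁻ x, f x ∂μ) ^ a = ⨆ n : ℕ, (∫⁻ x, min (f x) n ∂μ) ^ a := by
  have hmono : Monotone fun (n : ℕ) x ↦ min (f x) (n : ℝ≥0∞) := fun m n hmn x ↦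
    min_le_min_left _ (Nat.cast_le.2 hmn)
  have hiSup : ∫⁻ x, f x ∂μ = ⨆ n : ℕ, ∫⁻ x, min (f x) n ∂μ := by
    rw [← lintegral_iSup (fun n ↦ hf.min measurable_const) hmono]
    simp only [← inf_iSup_eq, ENNReal.iSup_natCast, inf_top_eq]
  rw [hiSup]
  exact (ENNReal.orderIsoRpow a ha).map_iSup _

theorem prekopaLeindler_real (ha : 0 < a) (hb : 0 < b) (hab : a + b = 1) :
    PrekopaLeindler (volume : Measure ℝ) a b := by
  intro f g h hf hg hh hfgh
  rw [rpow_lintegral_eq_iSup_rpow_lintegral_min _ ha hf,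
    rpow_lintegral_eq_iSup_rpow_lintegral_min _ hb hg]
  simp only [ENNReal.iSup_mul, ENNReal.mul_iSup]
  refine iSup_le fun m ↦ iSup_le fun n ↦ ?_
  have iSup_min_ne_top (u : ℝ → ℝ≥0∞) (k : ℕ) : ⨆ x, min (u x) k ≠ ∞ :=
    ne_top_of_le_ne_top (ENNReal.natCast_ne_top k) (iSup_le fun _ ↦ min_le_right _ _)
  refine prekopaLeindler_real_of_iSup_ne_top ha hb hab (hf.min measurable_const)
    (hg.min measurable_const) hh (iSup_min_ne_top f _) (iSup_min_ne_top g _) fun x y ↦ ?_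
  exact le_trans (by gcongr <;> exact min_le_left _ _) (hfgh x y)

namespace PrekopaLeindler

variable {E F : Type*} [AddCommGroup E] [Module ℝ E] [MeasurableSpace E] [AddCommGroup F]
  [Module ℝ F] [MeasurableSpace F] {μ : Measure E}

theorem dirac_zero (a b : ℝ) : PrekopaLeindler (Measure.dirac (0 : E)) a b := by
  intro f g h hf hg hh hfgh
  simpa [lintegral_dirac' _ hf, lintegral_dirac' _ hg, lintegral_dirac' _ hh] using hfgh 0 0

theorem prod {ν : Measure F} [SFinite ν] (hμ : PrekopaLeindler μ a b)
    (hν : PrekopaLeindler ν a b) : PrekopaLeindler (μ.prod ν) a b := by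
  intro f g h hf hg hh hfgh
  rw [lintegral_prod _ hf.aemeasurable, lintegral_prod _ hg.aemeasurable,
    lintegral_prod _ hh.aemeasurable]
  refine hμ hf.lintegral_prod_right' hg.lintegral_prod_right' hh.lintegral_prod_right' fun x x' ↦ ?_
  refine hν (hf.comp measurable_prodMk_left) (hg.comp measurable_prodMk_left)
    (hh.comp measurable_prodMk_left) fun y y' ↦ ?_
  exact hfgh (x, y) (x', y')

theorem map (hμ : PrekopaLeindler μ a b) (L : E →ₗ[ℝ] F) (hL : Measurable L) :
    PrekopaLeindler (μ.map L) a b := by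
  intro f g h hf hg hh hfgh
  rw [lintegral_map hf hL, lintegral_map hg hL, lintegral_map hh hL]
  refine hμ (hf.comp hL) (hg.comp hL) (hh.comp hL) fun x y ↦ ?_
  simpa using hfgh (L x) (L y)

theorem smul (hμ : PrekopaLeindler μ a b) (ha : 0 ≤ a) (hb : 0 ≤ b) (hab : a + b = 1)
    (c : ℝ≥0∞) : PrekopaLeindler (c • μ) a b := by
  intro f g h hf hg hh hfgh
  simp only [lintegral_smul_measure, smul_eq_mul]
  calc (c * ∫⁻ x, f x ∂μ) ^ a * (c * ∫⁻ x, g x ∂μ) ^ b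
      = c * ((∫⁻ x, f x ∂μ) ^ a * (∫⁻ x, g x ∂μ) ^ b) := by
        rw [ENNReal.mul_rpow_of_nonneg _ _ ha, ENNReal.mul_rpow_of_nonneg _ _ hb,
          mul_mul_mul_comm, ← ENNReal.rpow_add_of_nonneg a b ha hb, hab, ENNReal.rpow_one]
    _ ≤ c * ∫⁻ x, h x ∂μ := by
        gcongr
        exact hμ hf hg hh hfgh

end PrekopaLeindler

section AddHaar

variable {E F : Type*} [NormedAddCommGroup E] [NormedSpace ℝ E] [FiniteDimensional ℝ E]
  [MeasurableSpace E] [BorelSpace E] [NormedAddCommGroup F] [NormedSpace ℝ F]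
  [FiniteDimensional ℝ F] [MeasurableSpace F] [BorelSpace F]

theorem PrekopaLeindler.of_finrank_eq {μ : Measure E} [μ.IsAddHaarMeasure]
    (hμ : PrekopaLeindler μ a b) (ha : 0 ≤ a) (hb : 0 ≤ b) (hab : a + b = 1)
    (hEF : Module.finrank ℝ E = Module.finrank ℝ F) (ν : Measure F) [ν.IsAddHaarMeasure] :
    PrekopaLeindler ν a b := by
  let e : E ≃L[ℝ] F := ContinuousLinearEquiv.ofFinrankEq hEF
  have := e.isAddHaarMeasure_map μ
  rw [Measure.isAddLeftInvariant_eq_smul ν (μ.map e)]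
  exact (hμ.map e.toLinearMap e.continuous.measurable).smul ha hb hab _

theorem prekopaLeindler_pi (ha : 0 < a) (hb : 0 < b) (hab : a + b = 1) (n : ℕ) :
    PrekopaLeindler (volume : Measure (Fin n → ℝ)) a b := by
  induction n with
  | zero =>
    rw [Measure.volume_pi_eq_dirac 0]
    exact .dirac_zero a b
  | succ n ih =>
    refine ((prekopaLeindler_real ha hb hab).prod ih).of_finrank_eq ha.le hb.le hab ?_ _
    simp [add_comm]

theorem prekopaLeindler_addHaar (ha : 0 < a) (hb : 0 < b) (hab : a + b = 1) (μ : Measure E)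
    [μ.IsAddHaarMeasure] : PrekopaLeindler μ a b :=
  (prekopaLeindler_pi ha hb hab (Module.finrank ℝ E)).of_finrank_eq ha.le hb.le hab (by simp) μ

theorem rpow_measure_mul_rpow_measure_le (ha : 0 < a) (hb : 0 < b) (hab : a + b = 1)
    (μ : Measure E) [μ.IsAddHaarMeasure] {A B : Set E} (hA : MeasurableSet A)
    (hB : MeasurableSet B) : μ A ^ a * μ B ^ b ≤ μ (a • A + b • B) := by
  set C := toMeasurable μ (a • A + b • B)
  have hC : MeasurableSet C := measurableSet_toMeasurable _ _
  rw [← measure_toMeasurable (a • A + b • B), ← lintegral_indicator_one hA,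
    ← lintegral_indicator_one hB, ← lintegral_indicator_one hC]
  refine prekopaLeindler_addHaar ha hb hab μ (measurable_one.indicator hA)
    (measurable_one.indicator hB) (measurable_one.indicator hC) fun x y ↦ ?_
  by_cases hx : x ∈ A
  · by_cases hy : y ∈ B
    · have : a • x + b • y ∈ C := subset_toMeasurable _ _
        (add_mem_add (smul_mem_smul_set hx) (smul_mem_smul_set hy))
      simp [hx, hy, this]
    · simp [hy, hb]
  · simp [hx, ha]

theorem two_pow_finrank_mul_measure_le_measure_sub (μ : Measure E) [μ.IsAddHaarMeasure] {A : Set E}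
    (hA : MeasurableSet A) : 2 ^ Module.finrank ℝ E * μ A ≤ μ (A - A) := by
  have brunnMinkowski : μ A ≤ μ ((2⁻¹ : ℝ) • (A - A)) := by
    have h := rpow_measure_mul_rpow_measure_le (a := 2⁻¹) (b := 2⁻¹) (by norm_num) (by norm_num)
      (by norm_num) μ hA hA.neg
    rwa [Measure.measure_neg, ← ENNReal.rpow_add_of_nonneg _ _ (by norm_num) (by norm_num),
      show (2⁻¹ : ℝ) + 2⁻¹ = 1 by norm_num, ENNReal.rpow_one, ← smul_add, ← sub_eq_add_neg] at h
  calc 2 ^ Module.finrank ℝ E * μ A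
      ≤ 2 ^ Module.finrank ℝ E * μ ((2⁻¹ : ℝ) • (A - A)) := by gcongr
    _ = μ ((2 : ℝ) • (2⁻¹ : ℝ) • (A - A)) := by
        rw [Measure.addHaar_smul_of_nonneg μ zero_le_two, ENNReal.ofReal_pow zero_le_two,
          ENNReal.ofReal_ofNat]
    _ = μ (A - A) := by rw [smul_inv_smul₀ two_ne_zero]

end AddHaar

end PrekopaLeindler

section Covariogram

section AddGroup

variable {G : Type*} [AddGroup G] [MeasurableSpace G]

/-- The covariogram `x ↦ μ (A ∩ (x + A))` of `A` with respect to an arbitrary measure `μ`, which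
takes the junk value `0` where this measure is infinite. -/
noncomputable def covariogramOf (μ : Measure G) (A : Set G) (x : G) : ℝ :=
  μ.real (A ∩ (x +ᵥ A))

theorem ofReal_covariogramOf {μ : Measure G} {A : Set G} (hA_top : μ A ≠ ∞) (x : G) :
    ENNReal.ofReal (covariogramOf μ A x) = μ (A ∩ (x +ᵥ A)) :=
  ofReal_measureReal (measure_ne_top_of_subset inter_subset_left hA_top)

theorem covariogramOf_zero (μ : Measure G) (A : Set G) : covariogramOf μ A 0 = μ.real A := by
  rw [covariogramOf, zero_vadd, inter_self]

theorem support_covariogramOf_subset (μ : Measure G) (A : Set G) :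
    Function.support (covariogramOf μ A) ⊆ A - A := by
  intro x hx
  have : (A ∩ (x +ᵥ A)).Nonempty := by
    by_contra! h
    exact hx (by rw [covariogramOf, h, measureReal_empty])
  obtain ⟨_, hy, a, ha, rfl⟩ := this
  exact ⟨x + a, hy, a, ha, add_sub_cancel_right x a⟩

variable [MeasurableAdd₂ G] [MeasurableNeg G] {A B : Set G}

theorem measurableSet_setOf_mem_inter_vadd (hA : MeasurableSet A) (hB : MeasurableSet B) :
    MeasurableSet {p : G × G | p.2 ∈ A ∩ (p.1 +ᵥ B : Set G)} := by
  simp only [mem_inter_iff, mem_vadd_set_iff_neg_vadd_mem, vadd_eq_add]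
  exact (measurable_snd hA).inter ((measurable_fst.neg.add measurable_snd) hB)

theorem measurable_measure_inter_vadd (μ : Measure G) [SFinite μ] (hA : MeasurableSet A)
    (hB : MeasurableSet B) : Measurable fun x : G ↦ μ (A ∩ (x +ᵥ B)) :=
  measurable_measure_prodMk_left (measurableSet_setOf_mem_inter_vadd hA hB)

end AddGroup

section AddCommGroup

variable {G : Type*} [AddCommGroup G] [MeasurableSpace G] [MeasurableAdd₂ G] [MeasurableNeg G]
  {μ : Measure G} [SFinite μ] [μ.IsAddLeftInvariant] [μ.IsNegInvariant] {A B : Set G}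

theorem lintegral_measure_inter_vadd (hA : MeasurableSet A) (hB : MeasurableSet B) :
    ∫⁻ x, μ (A ∩ (x +ᵥ B)) ∂μ = μ A * μ B := by
  have hS := measurableSet_setOf_mem_inter_vadd hA hB
  calc ∫⁻ x, μ (A ∩ (x +ᵥ B)) ∂μ
      = ∫⁻ y, μ {x | y ∈ A ∩ (x +ᵥ B)} ∂μ :=
        (Measure.prod_apply hS).symm.trans (Measure.prod_apply_symm hS)
    _ = ∫⁻ y, A.indicator (fun _ ↦ μ B) y ∂μ := by
        refine lintegral_congr fun y ↦ ?_
        by_cases hy : y ∈ A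
        · rw [indicator_of_mem hy,
            ← (μ.measurePreserving_sub_left y).measure_preimage hB.nullMeasurableSet]
          simp [hy, preimage, mem_vadd_set_iff_neg_vadd_mem, sub_eq_neg_add]
        · simp [hy]
    _ = μ A * μ B := by rw [lintegral_indicator_const hA, mul_comm]

theorem lintegral_covariogramOf_div (hA : MeasurableSet A) (hA₀ : μ A ≠ 0) (hA_top : μ A ≠ ∞) :
    ∫⁻ x, ENNReal.ofReal (covariogramOf μ A x / μ.real A) ∂μ = μ A := by
  have hvol : 0 < μ.real A := ENNReal.toReal_pos hA₀ hA_top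
  calc ∫⁻ x, ENNReal.ofReal (covariogramOf μ A x / μ.real A) ∂μ
      = ∫⁻ x, μ (A ∩ (x +ᵥ A)) / μ A ∂μ := by
        simp only [ENNReal.ofReal_div_of_pos hvol, ofReal_covariogramOf hA_top,
          ofReal_measureReal hA_top]
    _ = μ A * μ A / μ A := by
        simp only [div_eq_mul_inv]
        rw [lintegral_mul_const _ (measurable_measure_inter_vadd μ hA hA),
          lintegral_measure_inter_vadd hA hA]
    _ = μ A := ENNReal.mul_div_cancel_right hA₀ hA_top

end AddCommGroup

end Covariogram

theorem setLIntegral_Ioo_rpow_mul_one_sub_rpow {α β : ℝ} (hα : 0 < α) (hβ : 0 < β) :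
    ∫⁻ t in Ioo (0 : ℝ) 1, ENNReal.ofReal (t ^ (α - 1) * (1 - t) ^ (β - 1)) =
      ENNReal.ofReal (ProbabilityTheory.beta α β) := by
  have hbeta := ProbabilityTheory.beta_pos hα hβ
  have h := ProbabilityTheory.lintegral_betaPDF_eq_one hα hβ
  simp only [ProbabilityTheory.lintegral_betaPDF, mul_assoc,
    ENNReal.ofReal_mul (one_div_nonneg.2 hbeta.le)] at h
  rw [lintegral_const_mul _ (by fun_prop), one_div, ENNReal.ofReal_inv_of_pos hbeta] at h
  rw [ENNReal.eq_inv_of_mul_eq_one_left ((mul_comm _ _).trans h), inv_inv]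

theorem natCast_mul_beta_succ {n : ℕ} (hn : n ≠ 0) :
    n * ProbabilityTheory.beta n (n + 1) = ((2 * n).choose n : ℝ)⁻¹ := by
  rw [ProbabilityTheory.beta, ← mul_div_assoc, ← mul_assoc,
    ← Real.Gamma_add_one (Nat.cast_ne_zero.2 hn), ← add_assoc, Real.Gamma_nat_eq_factorial,
    ← Nat.cast_add, Real.Gamma_nat_eq_factorial, two_mul, Nat.cast_add_choose, inv_div]

theorem isCompact_sub {G : Type*} [AddGroup G] [TopologicalSpace G] [IsTopologicalAddGroup G]
    {A B : Set G} (hA : IsCompact A) (hB : IsCompact B) : IsCompact (A - B) :=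
  sub_eq_add_neg A B ▸ hA.add hB.neg

section DifferenceBody

variable {E : Type*} [NormedAddCommGroup E] [NormedSpace ℝ E] [FiniteDimensional ℝ E]
  [MeasurableSpace E] [BorelSpace E] (μ : Measure E) [μ.IsAddHaarMeasure] {A : Set E}

theorem beta_mul_measure_le_lintegral_rpow {D : Set E} {f : E → ℝ} (hf : Measurable f)
    (hf₀ : 0 ≤ f) {p : ℝ} (hp : 0 < p)
    (hfD : ∀ t ∈ Ioo (0 : ℝ) 1, (1 - t) • D ⊆ {x | t ≤ f x}) :
    ENNReal.ofReal (p * ProbabilityTheory.beta p (Module.finrank ℝ E + 1)) * μ D ≤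
      ∫⁻ x, ENNReal.ofReal (f x ^ p) ∂μ := by
  calc ENNReal.ofReal (p * ProbabilityTheory.beta p (Module.finrank ℝ E + 1)) * μ D
      = ENNReal.ofReal p * ∫⁻ t in Ioo (0 : ℝ) 1,
          μ ((1 - t) • D) * ENNReal.ofReal (t ^ (p - 1)) := by
        rw [ENNReal.ofReal_mul hp.le, ← setLIntegral_Ioo_rpow_mul_one_sub_rpow hp (by positivity),
          mul_assoc, ← lintegral_mul_const _ (by fun_prop)]
        congr 1
        refine setLIntegral_congr_fun measurableSet_Ioo fun t ht ↦ ?_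
        rw [add_sub_cancel_right, Real.rpow_natCast,
          ENNReal.ofReal_mul (Real.rpow_nonneg ht.1.le _),
          Measure.addHaar_smul_of_nonneg _ (sub_nonneg.2 ht.2.le), mul_assoc, mul_comm]
    _ ≤ ENNReal.ofReal p * ∫⁻ t in Ioi (0 : ℝ), μ {x | t ≤ f x} * ENNReal.ofReal (t ^ (p - 1)) := by
        gcongr ENNReal.ofReal p * ?_
        refine (setLIntegral_mono' measurableSet_Ioo fun t ht ↦ ?_).trans
          (lintegral_mono_set Ioo_subset_Ioi_self)
        gcongr
        exact hfD t ht
    _ = ∫⁻ x, ENNReal.ofReal (f x ^ p) ∂μ :=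
        (lintegral_rpow_eq_lintegral_meas_le_mul μ (Eventually.of_forall hf₀) hf.aemeasurable
          hp).symm

theorem ofReal_one_sub_pow_mul_measure_le_measure_inter_vadd (hconv : Convex ℝ A) {t : ℝ}
    (ht₀ : 0 ≤ t) (ht₁ : t ≤ 1) {x : E} (hx : x ∈ t • (A - A)) :
    ENNReal.ofReal ((1 - t) ^ Module.finrank ℝ E) * μ A ≤ μ (A ∩ (x +ᵥ A)) := by
  obtain ⟨_, ⟨a, ha, b, hb, rfl⟩, rfl⟩ := hx
  calc ENNReal.ofReal ((1 - t) ^ Module.finrank ℝ E) * μ A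
      = μ ((t • a) +ᵥ ((1 - t) • A)) := by
        rw [measure_vadd, Measure.addHaar_smul_of_nonneg _ (sub_nonneg.2 ht₁)]
    _ ≤ μ (A ∩ (t • (a - b) +ᵥ A)) := by
        refine measure_mono ?_
        rintro _ ⟨_, ⟨y, hy, rfl⟩, rfl⟩
        refine ⟨hconv ha hy ht₀ (sub_nonneg.2 ht₁) (by ring), t • b + (1 - t) • y,
          hconv hb hy ht₀ (sub_nonneg.2 ht₁) (by ring), ?_⟩
        simp only [vadd_eq_add, smul_sub]
        abel

theorem one_sub_pow_mul_measureReal_le_covariogramOf (hconv : Convex ℝ A) (hA_top : μ A ≠ ∞) {t : ℝ}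
    (ht₀ : 0 ≤ t) (ht₁ : t ≤ 1) {x : E} (hx : x ∈ t • (A - A)) :
    (1 - t) ^ Module.finrank ℝ E * μ.real A ≤ covariogramOf μ A x := by
  have h := ofReal_one_sub_pow_mul_measure_le_measure_inter_vadd μ hconv ht₀ ht₁ hx
  rw [← ofReal_covariogramOf hA_top, ← ofReal_measureReal hA_top,
    ← ENNReal.ofReal_mul (pow_nonneg (sub_nonneg.2 ht₁) _)] at h
  exact (ENNReal.ofReal_le_ofReal_iff measureReal_nonneg).1 h

theorem smul_sub_subset_superlevel_covariogramOf (hconv : Convex ℝ A) (hA₀ : μ A ≠ 0)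
    (hA_top : μ A ≠ ∞) (hE : Module.finrank ℝ E ≠ 0) {t : ℝ} (ht : t ∈ Ioo (0 : ℝ) 1) :
    (1 - t) • (A - A) ⊆
      {x | t ≤ (covariogramOf μ A x / μ.real A) ^ (Module.finrank ℝ E : ℝ)⁻¹} := by
  intro x hx
  have hvol : 0 < μ.real A := ENNReal.toReal_pos hA₀ hA_top
  have h := one_sub_pow_mul_measureReal_le_covariogramOf μ hconv hA_top (sub_nonneg.2 ht.2.le)
    (sub_le_self 1 ht.1.le) hx
  rw [sub_sub_cancel, ← le_div_iff₀ hvol, ← Real.rpow_natCast] at h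
  exact (Real.le_rpow_inv_iff_of_pos ht.1.le (div_nonneg measureReal_nonneg hvol.le)
    (by positivity)).2 h

theorem measure_sub_le_choose_mul_measure (hA : MeasurableSet A) (hconv : Convex ℝ A)
    (hA₀ : μ A ≠ 0) :
    μ (A - A) ≤ (2 * Module.finrank ℝ E).choose (Module.finrank ℝ E) * μ A := by
  set n := Module.finrank ℝ E with hn
  rcases eq_or_ne n 0 with hn₀ | hn₀
  · have := Module.finrank_zero_iff.1 (hn.symm.trans hn₀)
    rw [Subsingleton.eq_univ_of_nonempty (nonempty_of_measure_ne_zero hA₀), hn₀]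
    simp
  have hchoose : 0 < (2 * n).choose n := Nat.choose_pos (by lia)
  rcases eq_or_ne (μ A) ∞ with hA_top | hA_top
  · simp [hA_top, hchoose.ne']
  have hvol : 0 < μ.real A := ENNReal.toReal_pos hA₀ hA_top
  set f : E → ℝ := fun x ↦ (covariogramOf μ A x / μ.real A) ^ (n : ℝ)⁻¹
  have hratio (x) : 0 ≤ covariogramOf μ A x / μ.real A := div_nonneg measureReal_nonneg hvol.le
  have hf : Measurable f :=
    ((measurable_measure_inter_vadd μ hA hA).ennreal_toReal.div_const _).pow_const _
  have hf_int : ∫⁻ x, ENNReal.ofReal (f x ^ (n : ℝ)) ∂μ = μ A := by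
    simp only [f, Real.rpow_inv_rpow (hratio _) (Nat.cast_ne_zero.2 hn₀)]
    exact lintegral_covariogramOf_div hA hA₀ hA_top
  have h := beta_mul_measure_le_lintegral_rpow μ hf (fun x ↦ Real.rpow_nonneg (hratio x) _)
    (Nat.cast_pos.2 (Nat.pos_of_ne_zero hn₀))
    fun t ↦ smul_sub_subset_superlevel_covariogramOf μ hconv hA₀ hA_top hn₀
  rw [hf_int, ← hn, natCast_mul_beta_succ hn₀, ENNReal.ofReal_inv_of_pos (by positivity),
    ENNReal.ofReal_natCast, mul_comm, ← div_eq_mul_inv] at h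
  rw [mul_comm]
  exact (ENNReal.div_le_iff_le_mul (Or.inl (by positivity))
    (Or.inl (ENNReal.natCast_ne_top _))).1 h

theorem smul_sub_subset_support_covariogramOf (hconv : Convex ℝ A) (hA₀ : μ A ≠ 0)
    (hA_top : μ A ≠ ∞) {t : ℝ} (ht : t ∈ Ico (0 : ℝ) 1) :
    t • (A - A) ⊆ Function.support (covariogramOf μ A) := fun _ hx ↦
  ((mul_pos (pow_pos (sub_pos.2 ht.2) _) (ENNReal.toReal_pos hA₀ hA_top)).trans_le
    (one_sub_pow_mul_measureReal_le_covariogramOf μ hconv hA_top ht.1 ht.2.le hx)).ne'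

theorem tsupport_covariogramOf (hA : IsCompact A) (hconv : Convex ℝ A) (hA₀ : μ A ≠ 0) :
    tsupport (covariogramOf μ A) = A - A := by
  refine (closure_minimal (support_covariogramOf_subset μ A)
    (isCompact_sub hA hA).isClosed).antisymm fun x hx ↦ ?_
  have one_mem : (1 : ℝ) ∈ closure (Ico (0 : ℝ) 1) := by simp [closure_Ico zero_ne_one]
  rw [← one_smul ℝ x]
  exact map_mem_closure (f := fun t : ℝ ↦ t • x) (by fun_prop) one_mem fun t ht ↦
    smul_sub_subset_support_covariogramOf μ hconv hA₀ hA.measure_ne_top ht (smul_mem_smul_set hx)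

theorem covariogram_zero_bounds_general (hA : IsCompact A) (hconv : Convex ℝ A) :
    ((2 * Module.finrank ℝ E).choose (Module.finrank ℝ E) : ℝ)⁻¹ *
        μ.real (tsupport (covariogramOf μ A)) ≤ covariogramOf μ A 0 ∧
      covariogramOf μ A 0 ≤
        ((2 : ℝ) ^ Module.finrank ℝ E)⁻¹ * μ.real (tsupport (covariogramOf μ A)) := by
  rcases eq_or_ne (μ A) 0 with hA₀ | hA₀
  · have : covariogramOf μ A = 0 := funext fun x ↦ by
      simp [covariogramOf, Measure.real, measure_mono_null inter_subset_left hA₀]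
    simp [this, tsupport]
  have hchoose : 0 < (2 * Module.finrank ℝ E).choose (Module.finrank ℝ E) :=
    Nat.choose_pos (by lia)
  have rogersShephard := measure_sub_le_choose_mul_measure μ hA.measurableSet hconv hA₀
  have brunnMinkowski := two_pow_finrank_mul_measure_le_measure_sub μ hA.measurableSet
  rw [tsupport_covariogramOf μ hA hconv hA₀, covariogramOf_zero, inv_mul_le_iff₀ (by positivity),
    le_inv_mul_iff₀ (by positivity)]
  constructor
  · simpa [Measure.real] using ENNReal.toReal_mono
      (ENNReal.mul_ne_top (ENNReal.natCast_ne_top _) hA.measure_ne_top) rogersShephard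
  · simpa [Measure.real] using ENNReal.toReal_mono (isCompact_sub hA hA).measure_ne_top
      brunnMinkowski

end DifferenceBody

theorem covariogram_eq_covariogramOf {n : ℕ} (A : Set (EuclideanSpace ℝ (Fin n))) :
    covariogram A = covariogramOf volume A := by
  ext x
  simp [covariogram, covariogramOf, Measure.real, add_comm _ x, ← image_vadd]

/-- For a convex body `A ⊆ ℝⁿ`,
`binom(2n,n)⁻¹ λₙ(supp g_A) ≤ g_A(0) ≤ 2⁻ⁿ λₙ(supp g_A)`. -/
theorem covariogram_zero_bounds {n : ℕ} (A : Set (EuclideanSpace ℝ (Fin n)))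
    (hA : IsCompact A) (hconv : Convex ℝ A) (hint : (interior A).Nonempty) :
    ((Nat.choose (2 * n) n : ℝ))⁻¹ * (volume (tsupport (covariogram A))).toReal ≤
      covariogram A 0 ∧
    covariogram A 0 ≤ ((2 : ℝ) ^ n)⁻¹ * (volume (tsupport (covariogram A))).toReal := by
  rw [covariogram_eq_covariogramOf]
  simpa only [finrank_euclideanSpace_fin, Measure.real] using
    covariogram_zero_bounds_general volume hA hconv
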